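/- Let n ≥ 4, let 0 < Z ≤ 2^n and set a = ⌊log_2 Z⌋. Let s and c be integers with 2^n - 2^s < c < 2^n - 2^{s-1} and s ≤ a. Then every 2^n-periodic binary sequence S with odd Hamming weight in one period and L_1(S) = c satisfies L_{1;Z}(S) = c, and the number of such sequences S is 2^{c - 1 + s}. -/

import Mathlib

/-- Generating polynomial `S^N(x) = s_0 + s_1 x + ... + s_{N-1} x^{N-1}` of one period
of an `N`-periodic binary sequence. -/
noncomputable def genPoly {N : ℕ} (S : Fin N → ZMod 2) : Polynomial (ZMod 2) :=
  ∑ i : Fin N, Polynomial.C (S i) * Polynomial.X ^ (i : ℕ)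

/-- Linear complexity `L(S) = N - deg (gcd (1 - x^N, S^N(x)))`. -/
noncomputable def linComp {N : ℕ} (S : Fin N → ZMod 2) : ℕ :=
  N - (EuclideanDomain.gcd (1 - Polynomial.X ^ N) (genPoly S)).natDegree

/-- Hamming weight of one period of an `N`-periodic binary sequence. -/
def wt {N : ℕ} (T : Fin N → ZMod 2) : ℕ :=
  (Finset.univ.filter (fun i => T i ≠ 0)).card

/-- `k`-error linear complexity `L_{N,k}(S)`. -/
noncomputable def errLC {N : ℕ} (S : Fin N → ZMod 2) (k : ℕ) : ℕ :=
  sInf {c | ∃ T : Fin N → ZMod 2, wt T ≤ k ∧ linComp (S + T) = c}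

/-- `k`-error linear complexity with a zone of length `Z`: `L_{N,k;Z}(S)`. -/
noncomputable def errLCZone {N : ℕ} (S : Fin N → ZMod 2) (k Z : ℕ) : ℕ :=
  sInf {c | ∃ T : Fin N → ZMod 2, wt T ≤ k ∧ (∀ i : Fin N, Z ≤ (i : ℕ) → T i = 0) ∧
    linComp (S + T) = c}

/-- `E_1(j)`: the sequence whose only nonzero term in one period is a `1` at position `j`. -/
def E1 {N : ℕ} (j : Fin N) : Fin N → ZMod 2 :=
  fun i => if i = j then 1 else 0

open Polynomial in
lemma aux_coeff {N : ℕ} (S : Fin N → ZMod 2) (i : Fin N) : (genPoly S).coeff i = S i := by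
  unfold genPoly
  rw [finset_sum_coeff]
  rw [Finset.sum_eq_single i]
  · simp
  · intro j _ hj
    rw [coeff_C_mul, coeff_X_pow, if_neg, mul_zero]
    intro h
    exact hj (Fin.ext h.symm)
  · simp

open Polynomial in
lemma aux_deg {N : ℕ} (S : Fin N → ZMod 2) : (genPoly S).degree < N := by
  unfold genPoly
  refine lt_of_le_of_lt (degree_sum_le _ _) ?_
  rw [Finset.sup_lt_iff (by exact WithBot.bot_lt_coe N)]
  intro i _
  refine lt_of_le_of_lt (degree_C_mul_X_pow_le _ _) ?_
  exact_mod_cast i.2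

open Polynomial in
lemma aux_gen {N : ℕ} (p : (ZMod 2)[X]) (hp : p.degree < N) :
    genPoly (fun i : Fin N => p.coeff i) = p := by
  ext k
  by_cases hk : k < N
  · exact aux_coeff (fun i : Fin N => p.coeff i) ⟨k, hk⟩
  · have hk' : (N : WithBot ℕ) ≤ k := by exact_mod_cast not_lt.1 hk
    rw [coeff_eq_zero_of_degree_lt (lt_of_lt_of_le (aux_deg _) hk'),
      coeff_eq_zero_of_degree_lt (lt_of_lt_of_le hp hk')]

lemma aux_inj {N : ℕ} {S T : Fin N → ZMod 2} (h : genPoly S = genPoly T) : S = T := by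
  funext i
  rw [← aux_coeff S, ← aux_coeff T, h]

lemma aux_add {N : ℕ} (S T : Fin N → ZMod 2) : genPoly (S + T) = genPoly S + genPoly T := by
  simp [genPoly, add_mul, Finset.sum_add_distrib]

open Polynomial in
lemma aux_E1 {N : ℕ} (j : Fin N) : genPoly (E1 j) = (X : (ZMod 2)[X]) ^ (j : ℕ) := by
  unfold genPoly E1
  rw [Finset.sum_eq_single j]
  · simp
  · intro i _ hi
    simp [hi]
  · simp

open Polynomial in
lemma aux_prime : Prime (X - C 1 : (ZMod 2)[X]) := prime_X_sub_C 1

open Polynomial in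
lemma aux_pow (n : ℕ) : (1 - X ^ (2 ^ n) : (ZMod 2)[X]) = (X - C 1) ^ (2 ^ n) := by
  rw [sub_pow_char_pow, ← C_pow, one_pow, C_1, ← neg_sub, CharTwo.neg_eq]

open Polynomial in
lemma aux_lc (n : ℕ) (S : Fin (2 ^ n) → ZMod 2) (c : ℕ) :
    linComp S ≤ c ↔ (X - C 1 : (ZMod 2)[X]) ^ (2 ^ n - c) ∣ genPoly S := by
  unfold linComp
  rw [aux_pow]
  set g := EuclideanDomain.gcd ((X - C 1 : (ZMod 2)[X]) ^ (2 ^ n)) (genPoly S) with hg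
  obtain ⟨k, hk, hass⟩ := (dvd_prime_pow aux_prime _).1
    (EuclideanDomain.gcd_dvd_left ((X - C 1 : (ZMod 2)[X]) ^ (2 ^ n)) (genPoly S))
  rw [← hg] at hass
  have hd : g.natDegree = k := by
    rw [natDegree_eq_of_degree_eq (degree_eq_degree_of_associated hass), natDegree_pow,
      natDegree_X_sub_C, mul_one]
  have h3 : (X - C 1 : (ZMod 2)[X]) ^ (2 ^ n - c) ∣ genPoly S ↔
      (X - C 1 : (ZMod 2)[X]) ^ (2 ^ n - c) ∣ g := by
    constructor
    · intro h
      exact EuclideanDomain.dvd_gcd (pow_dvd_pow _ (Nat.sub_le _ _)) h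
    · intro h
      exact h.trans (EuclideanDomain.gcd_dvd_right _ _)
  rw [h3, hass.dvd_iff_dvd_right, pow_dvd_pow_iff aux_prime.ne_zero aux_prime.not_unit, hd]
  omega

open Polynomial in
lemma aux_card (N m : ℕ) (hm : m ≤ N) :
    {U : Fin N → ZMod 2 | (X - C 1 : (ZMod 2)[X]) ^ m ∣ genPoly U}.ncard = 2 ^ (N - m) := by
  have hne : (X - C 1 : (ZMod 2)[X]) ^ m ≠ 0 := pow_ne_zero _ aux_prime.ne_zero
  have hdeg : ((X - C 1 : (ZMod 2)[X]) ^ m).degree = m := by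
    rw [degree_pow, degree_X_sub_C]; simp
  let f : (Fin (N - m) → ZMod 2) → (Fin N → ZMod 2) :=
    fun V i => ((X - C 1 : (ZMod 2)[X]) ^ m * genPoly V).coeff i
  have key : ∀ q : (ZMod 2)[X], ((X - C 1 : (ZMod 2)[X]) ^ m * q).degree < N ↔
      q.degree < (N - m : ℕ) := by
    intro q
    by_cases hq : q = 0
    · subst hq
      simp only [mul_zero, degree_zero]
      exact ⟨fun _ => WithBot.bot_lt_coe _, fun _ => WithBot.bot_lt_coe _⟩
    rw [degree_mul, hdeg, degree_eq_natDegree hq]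
    norm_cast
    omega
  have hf : ∀ V, genPoly (f V) = (X - C 1 : (ZMod 2)[X]) ^ m * genPoly V := fun V =>
    aux_gen _ ((key _).2 (aux_deg V))
  have hinj : Function.Injective f := by
    intro V W h
    apply aux_inj
    apply mul_left_cancel₀ hne
    rw [← hf, ← hf, h]
  have hr : {U : Fin N → ZMod 2 | (X - C 1 : (ZMod 2)[X]) ^ m ∣ genPoly U} = Set.image f Set.univ := by
    ext U
    simp only [Set.mem_setOf_eq, Set.image_univ, Set.mem_range]
    constructor
    · rintro ⟨q, hq⟩
      have := (key q).1 (hq ▸ aux_deg U)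
      refine ⟨fun i => q.coeff i, aux_inj ?_⟩
      rw [hf, aux_gen q this, hq]
    · rintro ⟨V, rfl⟩
      rw [hf]
      exact dvd_mul_right _ _
  rw [hr, Set.ncard_image_of_injective _ hinj, Set.ncard_univ]
  simp

open Polynomial in
lemma aux_card_eq (n c : ℕ) (hc0 : 0 < c) (hc : c ≤ 2 ^ n) :
    {U : Fin (2 ^ n) → ZMod 2 | linComp U = c}.ncard = 2 ^ (c - 1) := by
  have h : {U : Fin (2 ^ n) → ZMod 2 | linComp U = c} =
      {U | (X - C 1 : (ZMod 2)[X]) ^ (2 ^ n - c) ∣ genPoly U} \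
      {U | (X - C 1 : (ZMod 2)[X]) ^ (2 ^ n - (c - 1)) ∣ genPoly U} := by
    ext U
    simp only [Set.mem_setOf_eq, Set.mem_diff, ← aux_lc]
    omega
  rw [h, Set.ncard_diff, aux_card _ _ (Nat.sub_le _ _), aux_card _ _ (Nat.sub_le _ _)]
  · obtain ⟨d, rfl⟩ : ∃ d, c = d + 1 := ⟨c - 1, by omega⟩
    rw [Nat.sub_sub_self hc, Nat.sub_sub_self (by omega)]
    simp [pow_succ]; omega
  · intro U hU
    exact (pow_dvd_pow _ (by omega)).trans hU

open Polynomial in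
lemma aux_EE_dvd_le (s i j : ℕ) (hij : i ≤ j) (h : i ≡ j [MOD 2 ^ s]) :
    (X - C 1 : (ZMod 2)[X]) ^ (2 ^ s) ∣ X ^ i + X ^ j := by
  obtain ⟨k, hk⟩ := (Nat.modEq_iff_dvd' hij).1 h
  obtain rfl : j = i + 2 ^ s * k := by omega
  have : (X ^ i + X ^ (i + 2 ^ s * k) : (ZMod 2)[X]) = X ^ i * (1 - (X ^ (2 ^ s)) ^ k) := by
    rw [CharTwo.sub_eq_add]; ring
  rw [this, ← aux_pow]
  apply Dvd.dvd.mul_left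
  simpa using sub_dvd_pow_sub_pow (1 : (ZMod 2)[X]) (X ^ (2 ^ s)) k

open Polynomial in
lemma aux_EE_dvd (s i j : ℕ) (h : i ≡ j [MOD 2 ^ s]) :
    (X - C 1 : (ZMod 2)[X]) ^ (2 ^ s) ∣ X ^ i + X ^ j := by
  rcases le_total i j with hij | hij
  · exact aux_EE_dvd_le s i j hij h
  · rw [add_comm]; exact aux_EE_dvd_le s j i hij h.symm

open Polynomial in
lemma aux_EE_conv_le (s m i j : ℕ) (hm : 2 ^ (s - 1) < m) (hij : i ≤ j)
    (h : (X - C 1 : (ZMod 2)[X]) ^ m ∣ X ^ i + X ^ j) : i ≡ j [MOD 2 ^ s] := by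
  rw [Nat.modEq_iff_dvd' hij]
  by_contra hnd
  have hd0 : j - i ≠ 0 := by
    intro h0; rw [h0] at hnd; simp at hnd
  obtain ⟨v, d, hd, hvd⟩ := Nat.exists_eq_two_pow_mul_odd hd0
  have hvs : v < s := by
    by_contra hvs
    exact hnd (hvd ▸ (pow_dvd_pow 2 (not_lt.1 hvs)).mul_right d)
  have hvm : 2 ^ v < m :=
    lt_of_le_of_lt (Nat.pow_le_pow_right (by norm_num) (by omega)) hm
  obtain rfl : j = i + 2 ^ v * d := by omega
  set g : (ZMod 2)[X] := ∑ k ∈ Finset.range d, X ^ k with hg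
  have hgeom : (X - C 1) * g = X ^ d - 1 := by
    rw [hg, C_1, mul_geom_sum]
  have e : (X ^ i + X ^ (i + 2 ^ v * d) : (ZMod 2)[X]) =
      (X - C 1) ^ (2 ^ v) * (g ^ (2 ^ v) * X ^ i) := by
    rw [← mul_assoc, ← mul_pow, hgeom, sub_pow_char_pow, one_pow, CharTwo.sub_eq_add]
    ring
  have h' := (pow_dvd_pow (X - C 1 : (ZMod 2)[X]) (Nat.succ_le_of_lt hvm)).trans h
  rw [e, pow_succ, mul_dvd_mul_iff_left (pow_ne_zero _ aux_prime.ne_zero), dvd_iff_isRoot] at h'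
  have hdd : (d : ZMod 2) = 1 := ZMod.natCast_eq_one_iff_odd.2 hd
  simp [IsRoot, hg, eval_finset_sum, hdd] at h'

open Polynomial in
lemma aux_EE_conv (s m i j : ℕ) (hm : 2 ^ (s - 1) < m)
    (h : (X - C 1 : (ZMod 2)[X]) ^ m ∣ X ^ i + X ^ j) : i ≡ j [MOD 2 ^ s] := by
  rcases le_total i j with hij | hij
  · exact aux_EE_conv_le s m i j hm hij h
  · rw [add_comm] at h; exact (aux_EE_conv_le s m j i hm hij h).symm

open Polynomial in
lemma aux_odd {N : ℕ} (S : Fin N → ZMod 2) :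
    Odd (wt S) ↔ ¬ (X - C 1 : (ZMod 2)[X]) ∣ genPoly S := by
  have h : (genPoly S).eval 1 = (wt S : ZMod 2) := by
    unfold genPoly wt
    rw [eval_finset_sum, Finset.card_filter]
    push_cast
    refine Finset.sum_congr rfl fun i _ => ?_
    simp only [eval_mul, eval_C, eval_pow, eval_X, one_pow, mul_one]
    generalize S i = a
    revert a; decide
  rw [dvd_iff_isRoot, IsRoot, h, ZMod.natCast_eq_zero_iff_even, Nat.not_even_iff_odd]

lemma aux_wt1 {N : ℕ} (T : Fin N → ZMod 2) : wt T ≤ 1 ↔ T = 0 ∨ ∃ j, T = E1 j := by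
  constructor
  · intro h
    by_cases h0 : T = 0
    · exact Or.inl h0
    right
    obtain ⟨j, hj⟩ := Function.ne_iff.1 h0
    refine ⟨j, funext fun i => ?_⟩
    unfold wt at h
    rw [Finset.card_le_one] at h
    unfold E1
    have h2 : ∀ a : ZMod 2, a ≠ 0 → a = 1 := by decide
    split_ifs with hi
    · subst hi; exact h2 _ hj
    · by_contra hne
      exact hi (h i (by simpa using hne) j (by simpa using hj))
  · rintro (rfl | ⟨j, rfl⟩)
    · simp [wt]
    · have : (Finset.univ.filter (fun i => E1 j i ≠ 0)) = {j} := by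
        ext i; simp [E1]
      rw [wt, this]; simp

lemma aux_self {N : ℕ} (T : Fin N → ZMod 2) : T + T = 0 := by
  funext i
  exact CharTwo.add_self_eq_zero _

lemma aux_err_le {N : ℕ} (S : Fin N → ZMod 2) (j : Fin N) : errLC S 1 ≤ linComp (S + E1 j) :=
  Nat.sInf_le ⟨E1 j, (aux_wt1 _).2 (Or.inr ⟨j, rfl⟩), rfl⟩

open Polynomial in
lemma aux_odd_lc (n : ℕ) (S : Fin (2 ^ n) → ZMod 2) (h : Odd (wt S)) : 2 ^ n ≤ linComp S := by
  by_contra hlt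
  have h' := (aux_lc n S (2 ^ n - 1)).1 (by omega)
  rw [Nat.sub_sub_self Nat.one_le_two_pow, pow_one] at h'
  exact (aux_odd S).1 h h'

open Polynomial in
lemma aux_exists (n s c : ℕ) (hs : s ≤ n) (h1 : 2 ^ n - 2 ^ s < c) (hc : c < 2 ^ n)
    (S : Fin (2 ^ n) → ZMod 2) (ho : Odd (wt S)) (he : errLC S 1 = c) :
    ∃ j : Fin (2 ^ n), (j : ℕ) < 2 ^ s ∧ linComp (S + E1 j) = c := by
  have hne : {c | ∃ T : Fin (2 ^ n) → ZMod 2, wt T ≤ 1 ∧ linComp (S + T) = c}.Nonempty :=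
    ⟨_, 0, (aux_wt1 _).2 (Or.inl rfl), rfl⟩
  obtain ⟨T, hT, hTc⟩ := Nat.sInf_mem hne
  change _ = errLC S 1 at hTc
  rw [he] at hTc
  rcases (aux_wt1 T).1 hT with rfl | ⟨j0, rfl⟩
  · rw [add_zero] at hTc
    have := aux_odd_lc n S ho
    omega
  have hp : 2 ^ s ≤ 2 ^ n := Nat.pow_le_pow_right (by norm_num) hs
  have hlt : (j0 : ℕ) % 2 ^ s < 2 ^ s := Nat.mod_lt _ (by positivity)
  refine ⟨⟨(j0 : ℕ) % 2 ^ s, hlt.trans_le hp⟩, hlt, le_antisymm ?_ (he ▸ aux_err_le S _)⟩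
  set j : Fin (2 ^ n) := ⟨(j0 : ℕ) % 2 ^ s, hlt.trans_le hp⟩ with hj
  have e : S + E1 j = (S + E1 j0) + (E1 j0 + E1 j) := by
    rw [add_assoc, ← add_assoc (E1 j0), aux_self, zero_add]
  rw [aux_lc, e, aux_add, aux_add (E1 j0), aux_E1, aux_E1]
  refine dvd_add ((aux_lc _ _ _).1 hTc.le) ?_
  refine (pow_dvd_pow _ (show 2 ^ n - c ≤ 2 ^ s by omega)).trans (aux_EE_dvd s _ _ ?_)
  exact (Nat.mod_modEq _ _).symm

open Polynomial in
lemma aux_conv (n s c : ℕ) (h1 : 2 ^ n - 2 ^ s < c) (h2 : c < 2 ^ n - 2 ^ (s - 1))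
    (U : Fin (2 ^ n) → ZMod 2) (hU : linComp U = c) (j : Fin (2 ^ n)) :
    Odd (wt (U + E1 j)) ∧ errLC (U + E1 j) 1 = c := by
  have hpos1 : 0 < 2 ^ (s - 1) := Nat.two_pow_pos _
  have hpos2 : 0 < 2 ^ s := Nat.two_pow_pos _
  have hodd : Odd (wt (U + E1 j)) := by
    rw [aux_odd, aux_add, aux_E1]
    intro h
    have h' : (X - C 1 : (ZMod 2)[X]) ∣ genPoly U :=
      (dvd_pow_self _ (by omega)).trans ((aux_lc n U c).1 hU.le)
    rw [dvd_add_right h', dvd_iff_isRoot] at h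
    simp [IsRoot] at h
  refine ⟨hodd, le_antisymm ?_ ?_⟩
  · have := aux_err_le (U + E1 j) j
    rwa [add_assoc, aux_self, add_zero, hU] at this
  · refine le_csInf ⟨_, 0, (aux_wt1 _).2 (Or.inl rfl), rfl⟩ ?_
    rintro b ⟨T, hT, rfl⟩
    rcases (aux_wt1 T).1 hT with rfl | ⟨i, rfl⟩
    · have := aux_odd_lc n _ hodd
      rw [add_zero]
      omega
    by_contra hlt
    rw [not_le] at hlt
    have hd := (aux_lc n _ (c - 1)).1 (show linComp (U + E1 j + E1 i) ≤ c - 1 by omega)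
    have hUd := (aux_lc n U c).1 hU.le
    rw [add_assoc, aux_add, aux_add, aux_E1, aux_E1] at hd
    have hd' := (pow_dvd_pow _ (show 2 ^ n - c ≤ 2 ^ n - (c - 1) by omega)).trans hd
    rw [dvd_add_right hUd] at hd'
    have hmod := aux_EE_conv s (2 ^ n - c) j i (by omega) hd'
    have h3 := (pow_dvd_pow (X - C 1 : (ZMod 2)[X])
      (show 2 ^ n - (c - 1) ≤ 2 ^ s by omega)).trans (aux_EE_dvd s j i hmod)
    rw [dvd_add_left h3, ← aux_lc] at hd
    omega

/-- Case `s ≤ a` of the spectrum of `1`-error linear complexity with zone length `Z`: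
every odd-weight sequence with `L_1(S) = c` has `L_{1;Z}(S) = c`, and there are
exactly `2^{c-1+s}` such sequences. -/
theorem stmt8 (n Z s c : ℕ) (hn : 4 ≤ n) (hZ0 : 0 < Z) (hZ : Z ≤ 2^n)
    (h1 : 2^n - 2^s < c) (h2 : c < 2^n - 2^(s-1)) (hsa : s ≤ Nat.log 2 Z) :
    (∀ S : Fin (2^n) → ZMod 2, Odd (wt S) → errLC S 1 = c → errLCZone S 1 Z = c) ∧
    {S : Fin (2^n) → ZMod 2 | Odd (wt S) ∧ errLC S 1 = c}.ncard = 2^(c - 1 + s) := by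
  have hpos1 : 0 < 2 ^ (s - 1) := Nat.two_pow_pos _
  have hpos2 : 0 < 2 ^ s := Nat.two_pow_pos _
  have hs : s ≤ n := by
    refine hsa.trans ?_
    have := Nat.log_mono_right (b := 2) hZ
    rwa [Nat.log_pow (by norm_num)] at this
  have hp : 2 ^ s ≤ 2 ^ n := Nat.pow_le_pow_right (by norm_num) hs
  have hsZ : 2 ^ s ≤ Z := Nat.pow_le_of_le_log hZ0.ne' hsa
  have hc : c < 2 ^ n := by omega
  constructor
  · intro S ho he
    obtain ⟨j, hj, hjc⟩ := aux_exists n s c hs h1 hc S ho he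
    apply le_antisymm
    · refine Nat.sInf_le ⟨E1 j, (aux_wt1 _).2 (Or.inr ⟨j, rfl⟩), ?_, hjc⟩
      intro i hi
      have : i ≠ j := by rintro rfl; omega
      simp [E1, this]
    · refine le_csInf ⟨_, 0, (aux_wt1 _).2 (Or.inl rfl), by simp, rfl⟩ ?_
      rintro b ⟨T, hT, -, rfl⟩
      rw [← he]
      exact Nat.sInf_le ⟨T, hT, rfl⟩
  · let F : (Fin (2 ^ n) → ZMod 2) × Fin (2 ^ s) → (Fin (2 ^ n) → ZMod 2) :=
      fun p => p.1 + E1 (Fin.castLE hp p.2)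
    have himg : {S : Fin (2^n) → ZMod 2 | Odd (wt S) ∧ errLC S 1 = c} =
        Set.image F ({U | linComp U = c} ×ˢ Set.univ) := by
      ext S
      constructor
      · rintro ⟨ho, he⟩
        obtain ⟨j, hj, hjc⟩ := aux_exists n s c hs h1 hc S ho he
        refine ⟨(S + E1 j, ⟨j, hj⟩), ⟨hjc, trivial⟩, ?_⟩
        change S + E1 j + E1 j = S
        rw [add_assoc, aux_self, add_zero]
      · rintro ⟨⟨U, j⟩, ⟨hU, -⟩, rfl⟩
        exact aux_conv n s c h1 h2 U hU _
    have hinj : Set.InjOn F ({U | linComp U = c} ×ˢ Set.univ) := by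
      rintro ⟨U, i⟩ ⟨hU, -⟩ ⟨V, j⟩ ⟨hV, -⟩ h
      change U + E1 (Fin.castLE hp i) = V + E1 (Fin.castLE hp j) at h
      change linComp U = c at hU
      change linComp V = c at hV
      have e : U + V = E1 (Fin.castLE hp i) + E1 (Fin.castLE hp j) := by
        have h' : V = U + E1 (Fin.castLE hp i) + E1 (Fin.castLE hp j) := by
          rw [h, add_assoc, aux_self, add_zero]
        rw [h', add_assoc, ← add_assoc, aux_self, zero_add]
      have hd := dvd_add ((aux_lc n U c).1 hU.le) ((aux_lc n V c).1 hV.le)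
      rw [← aux_add, e, aux_add, aux_E1, aux_E1] at hd
      have hm := aux_EE_conv s (2 ^ n - c) _ _ (by omega) hd
      have hij : i = j := Fin.ext (Nat.ModEq.eq_of_lt_of_lt hm i.2 j.2)
      subst hij
      rw [add_left_inj] at h
      rw [h]
    rw [himg, Set.ncard_image_of_injOn hinj, Set.ncard_prod, aux_card_eq n c (by omega) hc.le,
      Set.ncard_univ, Nat.card_eq_fintype_card, Fintype.card_fin, pow_add]
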